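/- The 4-point 18-simple closed curve S = {p₁, p₆, p₅, p₉} ⊂ ℤ³ is 18-contractible: there exist a positive integer m and a function F : S × {0,1,...,m} → S such that F(x,0) = x for all x ∈ S, F(x,m) = p₆ for all x ∈ S, for each t ∈ {0,...,m} the map x ↦ F(x,t) sends 18-adjacent points of S to equal or 18-adjacent points, and for each x ∈ S and t ∈ {0,...,m−1} the points F(x,t) and F(x,t+1) are equal or 18-adjacent. -/

import Mathlib

/-!
`S` is a 4-cycle `p1 ~ p6 ~ p5 ~ p9 ~ p1`. It contracts in two steps: first it folds onto
the edge `{p1, p6}` by sending `p9` to `p1` and `p5` to `p6`, then that edge collapses to `p6`.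
-/

/-- Two points of ℤ³ are 18-adjacent: they are distinct, each coordinate differs
by at most 1, and at most 2 coordinates differ by exactly 1. -/
def adj18 (x y : ℤ × ℤ × ℤ) : Prop :=
  x ≠ y ∧ |x.1 - y.1| ≤ 1 ∧ |x.2.1 - y.2.1| ≤ 1 ∧ |x.2.2 - y.2.2| ≤ 1 ∧
    ¬(|x.1 - y.1| = 1 ∧ |x.2.1 - y.2.1| = 1 ∧ |x.2.2 - y.2.2| = 1)

/-- Two points of ℤ³ are 26-adjacent: they are distinct and each coordinate
differs by at most 1. -/
def adj26 (x y : ℤ × ℤ × ℤ) : Prop :=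
  x ≠ y ∧ |x.1 - y.1| ≤ 1 ∧ |x.2.1 - y.2.1| ≤ 1 ∧ |x.2.2 - y.2.2| ≤ 1

def p0 : ℤ × ℤ × ℤ := (0, 0, 0)
def p1 : ℤ × ℤ × ℤ := (1, 1, 0)
def p2 : ℤ × ℤ × ℤ := (1, 2, 0)
def p3 : ℤ × ℤ × ℤ := (0, 3, 0)
def p4 : ℤ × ℤ × ℤ := (-1, 2, 0)
def p5 : ℤ × ℤ × ℤ := (-1, 1, 0)
def p6 : ℤ × ℤ × ℤ := (0, 1, -1)
def p7 : ℤ × ℤ × ℤ := (0, 2, -1)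
def p8 : ℤ × ℤ × ℤ := (0, 2, 1)
def p9 : ℤ × ℤ × ℤ := (0, 1, 1)

/-- The 10-point digital model of the 2-sphere. -/
def MSS18 : Set (ℤ × ℤ × ℤ) := {p0, p1, p2, p3, p4, p5, p6, p7, p8, p9}

/-- The contraction at time `t`: the identity at `t = 0`, the fold onto the edge `{p1, p6}` at
`t = 1`, and the constant map `p6` afterwards. -/
def contraction (x : ℤ × ℤ × ℤ) : ℕ → ℤ × ℤ × ℤ
  | 0 => x
  | 1 => if x = p1 ∨ x = p9 then p1 else p6
  | _ => p6

instance (x y : ℤ × ℤ × ℤ) : Decidable (adj18 x y) := by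
  unfold adj18; infer_instance

-- Once `x` ranges over the four points, each goal is one large decidable conjunction, whose
-- instance exceeds the default search bounds.
set_option synthInstance.maxSize 2000 in
set_option synthInstance.maxHeartbeats 400000 in
/-- The 4-point 18-simple closed curve S = {p₁,p₆,p₅,p₉} is 18-contractible
(to the point p₆). -/
theorem S_is_18_contractible :
    ∃ m : ℕ, 0 < m ∧ ∃ F : (ℤ × ℤ × ℤ) → ℕ → (ℤ × ℤ × ℤ),
      (∀ x ∈ ({p1, p6, p5, p9} : Set (ℤ × ℤ × ℤ)), ∀ t ≤ m,
        F x t ∈ ({p1, p6, p5, p9} : Set (ℤ × ℤ × ℤ))) ∧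
      (∀ x ∈ ({p1, p6, p5, p9} : Set (ℤ × ℤ × ℤ)), F x 0 = x) ∧
      (∀ x ∈ ({p1, p6, p5, p9} : Set (ℤ × ℤ × ℤ)), F x m = p6) ∧
      (∀ t ≤ m, ∀ x ∈ ({p1, p6, p5, p9} : Set (ℤ × ℤ × ℤ)),
        ∀ x' ∈ ({p1, p6, p5, p9} : Set (ℤ × ℤ × ℤ)), adj18 x x' →
          F x t = F x' t ∨ adj18 (F x t) (F x' t)) ∧
      (∀ x ∈ ({p1, p6, p5, p9} : Set (ℤ × ℤ × ℤ)), ∀ t < m,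
        F x t = F x (t + 1) ∨ adj18 (F x t) (F x (t + 1))) := by
  refine ⟨2, by norm_num, contraction, ?_, ?_, ?_, ?_, ?_⟩ <;>
    simp only [Set.mem_insert_iff, Set.mem_singleton_iff, forall_eq_or_imp, forall_eq] <;>
    decide
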